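/- arXiv:1801.09089 — 2 statements merged into one kernel-verified Lean document; each statement's English description precedes it below -/
import Mathlib

section
/- Let G = {J_1,...,J_n} be a finite set of two-stage jobs, where J_i = (r_i,t_i) with r_i,t_i ≥ 0, and let G^d = {J_1^d,...,J_n^d} be the dual job set, where J_i^d = (t_i,r_i). On a single two-stage flowshop, the minimum completion time over all orderings of G equals the minimum completion time over all orderings of G^d: min over permutations σ of C(⟨J_{σ(1)},...,J_{σ(n)}⟩) equals min over permutations π of C(⟨J_{π(1)}^d,...,J_{π(n)}^d⟩). -/
/-- Adding a job `(r, t)` to a flowshop with status `(ρ, τ)` (completion times of the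
R-processor and T-processor) yields the status `(ρ + r, max (ρ + r) τ + t)`. -/
def stepFS (s j : ℝ × ℝ) : ℝ × ℝ := (s.1 + j.1, max (s.1 + j.1) s.2 + j.2)

/-- The status `(ρ, τ)` of a two-stage flowshop after processing a sequence of two-stage
jobs, starting from `(0, 0)`. -/
def statusFS (L : List (ℝ × ℝ)) : ℝ × ℝ := L.foldl stepFS (0, 0)

/-- The completion time of a sequence of two-stage jobs on a single two-stage flowshop. -/
def compFS (L : List (ℝ × ℝ)) : ℝ := (statusFS L).2

/-- The dual job of a two-stage job `(r, t)` is the job `(t, r)`. -/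
def dualJob (j : ℝ × ℝ) : ℝ × ℝ := (j.2, j.1)

/-!
Run time backwards: reversing a sequence and exchanging the two stages of every job reverses
every path from the first R-operation to the last T-operation, so the longest such path, which
is the completion time, is unchanged. For jobs of arbitrary sign the quantity preserved by this
reversal is the larger of the completion times of the two processors, and nonnegative jobs make
the T-processor finish last.
-/

/-- The dual of a sequence of two-stage jobs: the dual jobs in reverse order, which is the
schedule of the sequence seen backwards in time. -/
def dualSeq (L : List (ℝ × ℝ)) : List (ℝ × ℝ) := (L.map dualJob).reverse

/-- The completion times attained by the orderings of a job set, the set being given as a list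
so that equal jobs may occur several times. -/
def completionTimes (L : List (ℝ × ℝ)) : Set ℝ :=
  {c : ℝ | ∃ L' : List (ℝ × ℝ), L'.Perm L ∧ compFS L' = c}

theorem dualJob_involutive : Function.Involutive dualJob := fun _ => rfl

theorem dualSeq_perm_map_dualJob {L M : List (ℝ × ℝ)} (h : M.Perm L) :
    (dualSeq M).Perm (L.map dualJob) :=
  (List.reverse_perm _).trans (h.map dualJob)

theorem forall_mem_map_dualJob_nonneg {L : List (ℝ × ℝ)} (hL : ∀ j ∈ L, 0 ≤ j.1 ∧ 0 ≤ j.2) :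
    ∀ j ∈ L.map dualJob, 0 ≤ j.1 ∧ 0 ≤ j.2 :=
  List.forall_mem_map.2 fun j hj => (hL j hj).symm

theorem statusFS_dualSeq_cons (j : ℝ × ℝ) (L : List (ℝ × ℝ)) :
    statusFS (dualSeq (j :: L)) = stepFS (statusFS (dualSeq L)) (dualJob j) := by
  simp only [statusFS, dualSeq, List.map_cons, List.reverse_cons, List.foldl_append,
    List.foldl_cons, List.foldl_nil]

theorem statusFS_fst_le_compFS {L : List (ℝ × ℝ)} (hL : ∀ j ∈ L, 0 ≤ j.2) :
    (statusFS L).1 ≤ compFS L :=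
  List.foldlRecOn (motive := fun s : ℝ × ℝ => s.1 ≤ s.2) L stepFS le_rfl
    fun _ _ j hj => le_add_of_le_of_nonneg (le_max_left _ _) (hL j hj)

-- Starting from an arbitrary status `s` is what makes the induction go through: the first job
-- of `L` is absorbed into `s`, while its dual is the last job of `dualSeq L`.
theorem max_foldl_stepFS (L : List (ℝ × ℝ)) (s : ℝ × ℝ) :
    max (L.foldl stepFS s).1 (L.foldl stepFS s).2 =
      max (s.2 + (statusFS (dualSeq L)).1) (s.1 + compFS (dualSeq L)) := by
  induction L generalizing s with
  | nil => simp [dualSeq, compFS, statusFS, max_comm]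
  | cons j L ih =>
    rw [List.foldl_cons, ih, compFS, compFS, statusFS_dualSeq_cons]
    simp only [stepFS, dualJob]
    grind

theorem max_statusFS_dualSeq (L : List (ℝ × ℝ)) :
    max (statusFS (dualSeq L)).1 (compFS (dualSeq L)) = max (statusFS L).1 (compFS L) := by
  simpa only [zero_add, compFS, statusFS] using (max_foldl_stepFS L (0, 0)).symm

theorem compFS_dualSeq {L : List (ℝ × ℝ)} (hL : ∀ j ∈ L, 0 ≤ j.1 ∧ 0 ≤ j.2) :
    compFS (dualSeq L) = compFS L := by
  have hdual : (statusFS (dualSeq L)).1 ≤ compFS (dualSeq L) :=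
    statusFS_fst_le_compFS fun j hj =>
      (forall_mem_map_dualJob_nonneg hL j (List.mem_reverse.1 hj)).2
  have hprimal : (statusFS L).1 ≤ compFS L := statusFS_fst_le_compFS fun j hj => (hL j hj).2
  simpa only [max_eq_right hdual, max_eq_right hprimal] using max_statusFS_dualSeq L

theorem completionTimes_subset_map_dualJob {L : List (ℝ × ℝ)}
    (hL : ∀ j ∈ L, 0 ≤ j.1 ∧ 0 ≤ j.2) :
    completionTimes L ⊆ completionTimes (L.map dualJob) := by
  rintro _ ⟨M, hM, rfl⟩
  exact ⟨dualSeq M, dualSeq_perm_map_dualJob hM, compFS_dualSeq fun j hj => hL j (hM.subset hj)⟩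

theorem completionTimes_map_dualJob {L : List (ℝ × ℝ)} (hL : ∀ j ∈ L, 0 ≤ j.1 ∧ 0 ≤ j.2) :
    completionTimes (L.map dualJob) = completionTimes L := by
  refine Set.Subset.antisymm ?_ (completionTimes_subset_map_dualJob hL)
  have h := completionTimes_subset_map_dualJob (forall_mem_map_dualJob_nonneg hL)
  rwa [List.map_involutive_iff.2 dualJob_involutive L] at h

/-- On a single two-stage flowshop, the minimum completion time over all orderings of a
finite job set equals the minimum completion time over all orderings of the dual job set. -/
theorem stmt4 (L : List (ℝ × ℝ)) (hL : ∀ j ∈ L, 0 ≤ j.1 ∧ 0 ≤ j.2) :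
    sInf {c : ℝ | ∃ L' : List (ℝ × ℝ), L'.Perm L ∧ compFS L' = c} =
      sInf {c : ℝ | ∃ L' : List (ℝ × ℝ), L'.Perm (L.map dualJob) ∧ compFS L' = c} :=
  congrArg sInf (completionTimes_map_dualJob hL).symm
end

section
/- Let m ≥ 2, let G = {J_1,...,J_n} with J_i = (r_i,t_i), r_i,t_i ≥ 0 real, and let K > 0. Define the rounded job set G' = {J_1',...,J_n'} with J_i' = (⌊r_i/K⌋, ⌊t_i/K⌋). Let S' be a schedule of G' on m two-stage flowshops achieving the minimum makespan for G', given by a job index partition (P_1,...,P_m) with a job order on each part, and let S be the schedule of G on m flowshops that uses the same job index partition and the same job orders. Then the makespan of S satisfies C_max(S) ≤ Opt(G) + Kn, where Opt(G) is the minimum makespan of G on m flowshops. -/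
/-- A job index partition with a job order on each part: `P` assigns to each of the `m`
flowshops an ordered list of job indices, such that all together exactly the `n` job
indices `0, …, n − 1` occur. -/
def IsIdxSchedule (m n : ℕ) (P : Fin m → List ℕ) : Prop :=
  (List.ofFn P).flatten.Perm (List.range n)

/-- The makespan of an index schedule `P` on `m ≥ 1` flowshops for the jobs `f 0, f 1, …`:
the maximum over the flowshops of the completion time of the job sequence assigned to it. -/
noncomputable def idxMakespan {m : ℕ} (hm : 0 < m) (P : Fin m → List ℕ) (f : ℕ → ℝ × ℝ) : ℝ :=
  Finset.univ.sup' ⟨⟨0, hm⟩, Finset.mem_univ _⟩ fun h => compFS ((P h).map f)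

/-!
The completion time of a flowshop is the length of a longest path in which one critical job
contributes both of its stages, each earlier job its first stage and each later job its second.
Write the jobs as `f + e`, with `f` the rounded jobs scaled back by `K` and `0 ≤ e ≤ (K, K)`. On a
flowshop with `k` jobs the rounding errors add up to at most `K * (k + 1)` along any path, which is
good enough unless one flowshop of `S` holds all `n` jobs. To gain the missing `K`, compare with a
critical job `y` of the rounded jobs in the competing schedule: both errors of `y` are available
there, while in `S` every path uses at least one of them. Hence the error in `S` exceeds the error
in the competing schedule by at most `K * n`.
-/

section Flowshop

variable {ι : Type*} {K : ℝ} {L : List (ℝ × ℝ)} {l : List ι} {f e : ι → ℝ × ℝ}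

theorem stepFS_mono {s s' j j' : ℝ × ℝ} (hs : s ≤ s') (hj : j ≤ j') :
    stepFS s j ≤ stepFS s' j' :=
  ⟨add_le_add hs.1 hj.1, add_le_add (max_le_max (add_le_add hs.1 hj.1) hs.2) hj.2⟩

theorem foldl_stepFS_mono (L : List (ℝ × ℝ)) : Monotone fun s => L.foldl stepFS s :=
  List.foldl_monotone (f := stepFS) (fun _ _ _ hs => stepFS_mono hs le_rfl) L

theorem stepFS_add_le (s s' j j' : ℝ × ℝ) :
    stepFS (s + s') (j + j') ≤ stepFS s j + stepFS s' j' := by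
  refine ⟨(add_add_add_comm _ _ _ _).le, ?_⟩
  calc max (s.1 + s'.1 + (j.1 + j'.1)) (s.2 + s'.2) + (j.2 + j'.2)
      = max (s.1 + j.1 + (s'.1 + j'.1)) (s.2 + s'.2) + (j.2 + j'.2) := by
        rw [add_add_add_comm]
    _ ≤ max (s.1 + j.1) s.2 + max (s'.1 + j'.1) s'.2 + (j.2 + j'.2) := by
        gcongr
        exact max_add_add_le_max_add_max
    _ = max (s.1 + j.1) s.2 + j.2 + (max (s'.1 + j'.1) s'.2 + j'.2) :=
        add_add_add_comm _ _ _ _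

theorem stepFS_smul (hK : 0 ≤ K) (s j : ℝ × ℝ) : stepFS (K • s) (K • j) = K • stepFS s j := by
  simp only [stepFS, Prod.smul_fst, Prod.smul_snd, Prod.smul_mk, smul_eq_mul, mul_add,
    mul_max_of_nonneg _ _ hK]

theorem statusFS_concat (L : List (ℝ × ℝ)) (j : ℝ × ℝ) :
    statusFS (L ++ [j]) = stepFS (statusFS L) j :=
  List.foldl_concat ..

theorem compFS_concat (L : List (ℝ × ℝ)) (j : ℝ × ℝ) :
    compFS (L ++ [j]) = max ((statusFS L).1 + j.1) (compFS L) + j.2 := by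
  rw [compFS, statusFS_concat]
  rfl

theorem statusFS_map_mono {g : ι → ℝ × ℝ} (h : ∀ i ∈ l, f i ≤ g i) :
    statusFS (l.map f) ≤ statusFS (l.map g) := by
  induction l using List.reverseRecOn with
  | nil => exact le_rfl
  | append_singleton l x ih =>
    simp only [List.map_append, List.map_singleton, statusFS_concat]
    exact stepFS_mono (ih fun i hi => h i (by simp [hi])) (h x (by simp))

theorem compFS_nonneg (hL : ∀ j ∈ L, 0 ≤ j.2) : 0 ≤ compFS L := by
  induction L using List.reverseRecOn with
  | nil => exact le_rfl
  | append_singleton L j ih =>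
    rw [compFS_concat]
    exact add_nonneg (le_max_of_le_right (ih fun i hi => hL i (by simp [hi]))) (hL j (by simp))

theorem statusFS_map_add_le (l : List ι) (f e : ι → ℝ × ℝ) :
    statusFS (l.map (f + e)) ≤ statusFS (l.map f) + statusFS (l.map e) := by
  induction l using List.reverseRecOn with
  | nil => simp [statusFS]
  | append_singleton l x ih =>
    simp only [List.map_append, List.map_singleton, statusFS_concat]
    exact (stepFS_mono ih le_rfl).trans (stepFS_add_le _ _ _ _)

theorem compFS_map_add_le (l : List ι) (f e : ι → ℝ × ℝ) :
    compFS (l.map (f + e)) ≤ compFS (l.map f) + compFS (l.map e) :=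
  (statusFS_map_add_le l f e).2

theorem statusFS_map_smul (hK : 0 ≤ K) (l : List ι) (f : ι → ℝ × ℝ) :
    statusFS (l.map (K • f)) = K • statusFS (l.map f) := by
  induction l using List.reverseRecOn with
  | nil => simp [statusFS]
  | append_singleton l x ih =>
    simp only [List.map_append, List.map_singleton, statusFS_concat, ih, Pi.smul_apply,
      stepFS_smul hK]

theorem compFS_map_smul (hK : 0 ≤ K) (l : List ι) (f : ι → ℝ × ℝ) :
    compFS (l.map (K • f)) = K * compFS (l.map f) :=
  congrArg Prod.snd (statusFS_map_smul hK l f)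

-- The job `y` is a critical job of the sequence `l.map f`.
theorem exists_mem_compFS_add_le (hl : l ≠ []) (hf : ∀ i ∈ l, 0 ≤ (f i).1)
    (he : ∀ i ∈ l, 0 ≤ e i) :
    ∃ y ∈ l, compFS (l.map f) + ((e y).1 + (e y).2) ≤ compFS (l.map (f + e)) := by
  induction l using List.reverseRecOn with
  | nil => exact absurd rfl hl
  | append_singleton l x ih =>
    simp only [List.map_append, List.map_singleton, compFS_concat, Pi.add_apply, Prod.fst_add,
      Prod.snd_add]
    have hfst : (statusFS (l.map f)).1 ≤ (statusFS (l.map (f + e))).1 :=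
      (statusFS_map_mono fun i hi => le_add_of_nonneg_right (he i (by simp [hi]))).1
    rcases le_or_gt (compFS (l.map f)) ((statusFS (l.map f)).1 + (f x).1) with hx | hx
    · refine ⟨x, by simp, ?_⟩
      rw [max_eq_left hx]
      linarith [le_max_left ((statusFS (l.map (f + e))).1 + ((f x).1 + (e x).1))
        (compFS (l.map (f + e)))]
    · have hl' : l ≠ [] := by
        rintro rfl
        have hfx : 0 ≤ (f x).1 := hf x (by simp)
        simp [compFS, statusFS] at hx
        linarith
      obtain ⟨y, hy, hle⟩ := ih hl' (fun i hi => hf i (by simp [hi]))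
        (fun i hi => he i (by simp [hi]))
      refine ⟨y, by simp [hy], ?_⟩
      rw [max_eq_right hx.le]
      have hex : 0 ≤ (e x).2 := (he x (by simp)).2
      linarith [le_max_right ((statusFS (l.map (f + e))).1 + ((f x).1 + (e x).1))
        (compFS (l.map (f + e)))]

theorem foldl_stepFS_le {s : ℝ × ℝ} (hs : s.1 + K ≤ s.2) (hL : ∀ j ∈ L, j ≤ (K, K)) :
    L.foldl stepFS s ≤ s + (L.length : ℝ) • (K, K) := by
  induction L generalizing s with
  | nil => simp
  | cons j L ih =>
    have hj : j ≤ (K, K) := hL j List.mem_cons_self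
    have hstep : stepFS s j ≤ s + (K, K) :=
      ⟨add_le_add_right hj.1 _,
        add_le_add (max_le ((add_le_add_right hj.1 _).trans hs) le_rfl) hj.2⟩
    calc (j :: L).foldl stepFS s
        ≤ L.foldl stepFS (s + (K, K)) := foldl_stepFS_mono L hstep
      _ ≤ s + (K, K) + (L.length : ℝ) • (K, K) :=
          ih (add_le_add_left hs K) fun i hi => hL i (List.mem_cons_of_mem j hi)
      _ = s + ((j :: L).length : ℝ) • (K, K) := by
          rw [List.length_cons, Nat.cast_add_one, add_smul, one_smul, add_assoc,
            add_comm (K, K)]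

theorem statusFS_le (hK : 0 ≤ K) (hL : ∀ j ∈ L, j ≤ (K, K)) :
    statusFS L ≤ (0, K) + (L.length : ℝ) • (K, K) :=
  (foldl_stepFS_mono L (Prod.mk_le_mk.2 ⟨le_rfl, hK⟩)).trans
    (foldl_stepFS_le (zero_add K).le hL)

theorem compFS_le (hK : 0 ≤ K) (hL : ∀ j ∈ L, j ≤ (K, K)) :
    compFS L ≤ K * (L.length + 1) := by
  have h : compFS L ≤ K + L.length * K := (statusFS_le hK hL).2
  linarith

theorem compFS_le_of_mem {j : ℝ × ℝ} (hL : ∀ i ∈ L, i ≤ (K, K)) (hj : j ∈ L) (hj₀ : 0 ≤ j) :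
    compFS L ≤ j.1 + j.2 + K * L.length := by
  have hj₁ : 0 ≤ j.1 := hj₀.1
  have hj₂ : 0 ≤ j.2 := hj₀.2
  have hK : 0 ≤ K := hj₁.trans (hL j hj).1
  obtain ⟨U, V, rfl⟩ := List.append_of_mem hj
  let s : ℝ × ℝ := (j.1 + U.length * K, j.1 + j.2 + K + U.length * K)
  have hU : statusFS (U ++ [j]) ≤ s := by
    have hle := statusFS_le hK fun i (hi : i ∈ U) => hL i (by simp [hi])
    have h₁ : (statusFS U).1 ≤ 0 + U.length * K := hle.1
    have h₂ : compFS U ≤ K + U.length * K := hle.2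
    rw [statusFS_concat]
    refine ⟨by simp only [stepFS, s]; linarith, ?_⟩
    have hmax : max ((statusFS U).1 + j.1) (compFS U) ≤ j.1 + K + U.length * K :=
      max_le (by linarith) (by linarith)
    change max ((statusFS U).1 + j.1) (compFS U) + j.2 ≤ j.1 + j.2 + K + U.length * K
    linarith
  have hV : compFS (U ++ j :: V) ≤ s.2 + V.length * K :=
    calc compFS (U ++ j :: V)
        = (V.foldl stepFS (statusFS (U ++ [j]))).2 := by simp [compFS, statusFS]
      _ ≤ (V.foldl stepFS s).2 := (foldl_stepFS_mono V hU).2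
      _ ≤ s.2 + V.length * K :=
          (foldl_stepFS_le (by simp only [s]; linarith) fun i hi => hL i (by simp [hi])).2
  simp only [List.length_append, List.length_cons, Nat.cast_add, Nat.cast_one]
  linarith

end Flowshop

theorem sublist_flatten_ofFn {α : Type*} {m : ℕ} (P : Fin m → List α) (h : Fin m) :
    (P h).Sublist (List.ofFn P).flatten :=
  List.sublist_flatten_of_mem (List.mem_ofFn.2 ⟨h, rfl⟩)

namespace IsIdxSchedule

variable {m n : ℕ} {P : Fin m → List ℕ}

theorem lt_of_mem (hP : IsIdxSchedule m n P) {h : Fin m} {i : ℕ} (hi : i ∈ P h) : i < n :=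
  List.mem_range.1 (hP.mem_iff.1 ((sublist_flatten_ofFn P h).subset hi))

theorem exists_mem (hP : IsIdxSchedule m n P) {i : ℕ} (hi : i < n) : ∃ h, i ∈ P h := by
  obtain ⟨l, hl, hil⟩ := List.mem_flatten.1 (hP.mem_iff.2 (List.mem_range.2 hi))
  obtain ⟨h, rfl⟩ := List.mem_ofFn.1 hl
  exact ⟨h, hil⟩

theorem length_le (hP : IsIdxSchedule m n P) (h : Fin m) : (P h).length ≤ n := by
  simpa only [hP.length_eq, List.length_range] using (sublist_flatten_ofFn P h).length_le

theorem length_lt_of_notMem (hP : IsIdxSchedule m n P) {h : Fin m} {i : ℕ} (hi : i < n)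
    (hih : i ∉ P h) : (P h).length < n := by
  refine (hP.length_le h).lt_of_ne fun hlen => hih ?_
  have hfull : P h = (List.ofFn P).flatten :=
    (sublist_flatten_ofFn P h).eq_of_length (by rw [hP.length_eq, List.length_range, hlen])
  rw [hfull, hP.mem_iff]
  exact List.mem_range.2 hi

theorem compFS_map_le (hP : IsIdxSchedule m n P) {K : ℝ} {e : ℕ → ℝ × ℝ}
    (he₀ : ∀ i < n, 0 ≤ e i) (heK : ∀ i < n, e i ≤ (K, K)) {y : ℕ} (hy : y < n) (h : Fin m) :
    compFS ((P h).map e) ≤ (e y).1 + (e y).2 + K * n := by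
  have hy₁ : 0 ≤ (e y).1 := (he₀ y hy).1
  have hy₂ : 0 ≤ (e y).2 := (he₀ y hy).2
  have hK : 0 ≤ K := hy₁.trans (heK y hy).1
  have hL : ∀ j ∈ (P h).map e, j ≤ (K, K) :=
    List.forall_mem_map.2 fun i hi => heK i (hP.lt_of_mem hi)
  by_cases hyP : y ∈ P h
  · have hle := compFS_le_of_mem hL (List.mem_map_of_mem hyP) (he₀ y hy)
    rw [List.length_map] at hle
    have hlen : ((P h).length : ℝ) ≤ n := by exact_mod_cast hP.length_le h
    exact hle.trans (by gcongr)
  · have hle := compFS_le hK hL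
    rw [List.length_map] at hle
    have hlen : ((P h).length : ℝ) + 1 ≤ n := by exact_mod_cast hP.length_lt_of_notMem hy hyP
    linarith [mul_le_mul_of_nonneg_left hlen hK]

end IsIdxSchedule

section Makespan

variable {m n : ℕ} (hm : 0 < m) {P Q : Fin m → List ℕ} {K : ℝ} {f e : ℕ → ℝ × ℝ}

theorem compFS_le_idxMakespan (P : Fin m → List ℕ) (f : ℕ → ℝ × ℝ) (h : Fin m) :
    compFS ((P h).map f) ≤ idxMakespan hm P f :=
  Finset.le_sup' (fun h => compFS ((P h).map f)) (Finset.mem_univ h)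

theorem idxMakespan_smul (hK : 0 ≤ K) (P : Fin m → List ℕ) (f : ℕ → ℝ × ℝ) :
    idxMakespan hm P (K • f) = K * idxMakespan hm P f := by
  simp only [idxMakespan, compFS_map_smul hK]
  exact (Finset.mul₀_sup' hK _ _ _).symm

theorem exists_ne_nil_compFS_eq_idxMakespan (hQ : IsIdxSchedule m n Q) (hn : 0 < n)
    (hf : ∀ i < n, 0 ≤ (f i).2) :
    ∃ q, Q q ≠ [] ∧ compFS ((Q q).map f) = idxMakespan hm Q f := by
  obtain ⟨q, -, hq⟩ := Finset.exists_mem_eq_sup' ⟨⟨0, hm⟩, Finset.mem_univ _⟩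
    fun h => compFS ((Q h).map f)
  by_cases hnil : Q q = []
  · obtain ⟨p, hp⟩ := hQ.exists_mem hn
    refine ⟨p, List.ne_nil_of_mem hp, (compFS_le_idxMakespan hm Q f p).antisymm ?_⟩
    calc idxMakespan hm Q f = compFS ((Q q).map f) := hq
      _ = 0 := by rw [hnil]; rfl
      _ ≤ compFS ((Q p).map f) :=
          compFS_nonneg (List.forall_mem_map.2 fun i hi => hf i (hQ.lt_of_mem hi))
  · exact ⟨q, hnil, hq.symm⟩

theorem idxMakespan_add_le_of_le (hP : IsIdxSchedule m n P) (hQ : IsIdxSchedule m n Q)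
    (hf : ∀ i < n, 0 ≤ f i) (he₀ : ∀ i < n, 0 ≤ e i) (heK : ∀ i < n, e i ≤ (K, K))
    (hPQ : idxMakespan hm P f ≤ idxMakespan hm Q f) :
    idxMakespan hm P (f + e) ≤ idxMakespan hm Q (f + e) + K * n := by
  rcases n.eq_zero_or_pos with rfl | hn
  · have hnil {R : Fin m → List ℕ} (hR : IsIdxSchedule m 0 R) (h : Fin m) : R h = [] :=
      List.eq_nil_of_length_eq_zero (Nat.le_zero.1 (hR.length_le h))
    have hPQ_eq : P = Q := funext fun h => (hnil hP h).trans (hnil hQ h).symm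
    simp [hPQ_eq]
  obtain ⟨q, hq, hqmax⟩ := exists_ne_nil_compFS_eq_idxMakespan hm hQ hn fun i hi => (hf i hi).2
  obtain ⟨y, hy, hcrit⟩ := exists_mem_compFS_add_le hq
    (fun i hi => (hf i (hQ.lt_of_mem hi)).1) (fun i hi => he₀ i (hQ.lt_of_mem hi))
  refine Finset.sup'_le _ _ fun h _ => ?_
  calc compFS ((P h).map (f + e))
      ≤ compFS ((P h).map f) + compFS ((P h).map e) := compFS_map_add_le _ _ _
    _ ≤ idxMakespan hm Q f + ((e y).1 + (e y).2 + K * n) :=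
        add_le_add ((compFS_le_idxMakespan hm P f h).trans hPQ)
          (hP.compFS_map_le he₀ heK (hQ.lt_of_mem hy) h)
    _ = compFS ((Q q).map f) + ((e y).1 + (e y).2) + K * n := by
        rw [hqmax, add_assoc (idxMakespan hm Q f)]
    _ ≤ compFS ((Q q).map (f + e)) + K * n := by gcongr
    _ ≤ idxMakespan hm Q (f + e) + K * n := by
        gcongr
        exact compFS_le_idxMakespan hm Q (f + e) q

end Makespan

theorem stmt17_general (m : ℕ) (hm : 0 < m) (n : ℕ) (r t : ℕ → ℝ)
    (hr : ∀ i, i < n → 0 ≤ r i) (ht : ∀ i, i < n → 0 ≤ t i)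
    (K : ℝ) (hK : 0 < K)
    (P : Fin m → List ℕ) (hP : IsIdxSchedule m n P)
    (hPopt : ∀ Q : Fin m → List ℕ, IsIdxSchedule m n Q →
      idxMakespan hm P (fun i => ((⌊r i / K⌋ : ℝ), (⌊t i / K⌋ : ℝ))) ≤
        idxMakespan hm Q (fun i => ((⌊r i / K⌋ : ℝ), (⌊t i / K⌋ : ℝ)))) :
    idxMakespan hm P (fun i => (r i, t i)) ≤
      sInf {c : ℝ | ∃ Q : Fin m → List ℕ, IsIdxSchedule m n Q ∧
        idxMakespan hm Q (fun i => (r i, t i)) = c} + K * n := by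
  let f : ℕ → ℝ × ℝ := fun i => (⌊r i / K⌋, ⌊t i / K⌋)
  let e : ℕ → ℝ × ℝ := fun i => (Int.fract (r i / K), Int.fract (t i / K))
  have hsum : (fun i => (r i, t i)) = K • f + K • e := by
    funext i
    rw [← smul_add]
    simp [f, e, Int.floor_add_fract, mul_div_cancel₀ _ hK.ne']
  have hf : ∀ i < n, 0 ≤ (K • f) i := fun i hi =>
    smul_nonneg hK.le ⟨Int.cast_nonneg (Int.floor_nonneg.2 (div_nonneg (hr i hi) hK.le)),
      Int.cast_nonneg (Int.floor_nonneg.2 (div_nonneg (ht i hi) hK.le))⟩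
  have he₀ : ∀ i < n, 0 ≤ (K • e) i := fun i _ =>
    smul_nonneg hK.le ⟨Int.fract_nonneg _, Int.fract_nonneg _⟩
  have heK : ∀ i < n, (K • e) i ≤ (K, K) := fun i _ =>
    ⟨mul_le_of_le_one_right hK.le (Int.fract_lt_one _).le,
      mul_le_of_le_one_right hK.le (Int.fract_lt_one _).le⟩
  rw [← sub_le_iff_le_add]
  refine le_csInf ⟨_, P, hP, rfl⟩ ?_
  rintro _ ⟨Q, hQ, rfl⟩
  rw [sub_le_iff_le_add, hsum]
  refine idxMakespan_add_le_of_le hm hP hQ hf he₀ heK ?_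
  rw [idxMakespan_smul hm hK.le, idxMakespan_smul hm hK.le]
  exact mul_le_mul_of_nonneg_left (hPopt Q hQ) hK.le

/-- Let `m ≥ 2`, let `G` consist of jobs `(r_i, t_i)`, `i < n`, with nonnegative times,
let `K > 0`, and let `G'` consist of the rounded jobs `(⌊r_i/K⌋, ⌊t_i/K⌋)`. If `P` is a
schedule (job index partition together with a job order on each part) achieving the
minimum makespan for `G'` on `m` two-stage flowshops, then the schedule of `G` using the
same partition and orders has makespan at most `Opt(G) + K·n`, where `Opt(G)` is the
minimum makespan of `G` on `m` flowshops. -/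
theorem stmt17 (m : ℕ) (hm : 2 ≤ m) (n : ℕ) (r t : ℕ → ℝ)
    (hr : ∀ i, i < n → 0 ≤ r i) (ht : ∀ i, i < n → 0 ≤ t i)
    (K : ℝ) (hK : 0 < K)
    (P : Fin m → List ℕ) (hP : IsIdxSchedule m n P)
    (hPopt : ∀ Q : Fin m → List ℕ, IsIdxSchedule m n Q →
      idxMakespan (by omega) P (fun i => ((⌊r i / K⌋ : ℝ), (⌊t i / K⌋ : ℝ))) ≤
        idxMakespan (by omega) Q (fun i => ((⌊r i / K⌋ : ℝ), (⌊t i / K⌋ : ℝ)))) :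
    idxMakespan (by omega : 0 < m) P (fun i => (r i, t i)) ≤
      sInf {c : ℝ | ∃ Q : Fin m → List ℕ, IsIdxSchedule m n Q ∧
        idxMakespan (by omega : 0 < m) Q (fun i => (r i, t i)) = c} + K * n :=
  stmt17_general m (by omega) n r t hr ht K hK P hP hPopt
end
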